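/- Let Λ ⊂ ℝ^L be a full-rank lattice with covolume ν. For r > 0 set N(r) = #{λ ∈ Λ : ‖λ‖ ≤ r} and T(r) = Σ_{λ ∈ Λ, ‖λ‖ ≤ r} ‖λ‖². Then lim_{r→∞} T(r) / (L · N(r)^{1+2/L}) = G(S_L) · ν^{2/L}, where G(S_L) = Γ(L/2+1)^{2/L} / ((L+2)π). -/

import Mathlib

open Filter

/-!
Lattice point counting gives `N(r) / r ^ L → c := vol(unit ball) / ν`. The second moment follows
from the counting function alone by Abel summation: since `r² - ‖x‖² = ∫₀¹ 2 r² u 1[‖x‖ ≤ r u] du`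
for `‖x‖ ≤ r`, summing over the lattice points of norm at most `r` yields
`T(r) = r² (N(r) - ∫₀¹ 2 u N(r u) du)`. After division by `r ^ (L + 2)` the integrand converges to
`2 c u ^ (L + 1)`, and it is dominated because `N` is monotone, so that
`T(r) / r ^ (L + 2) → c - 2 c / (L + 2) = c L / (L + 2)` (`tendsto_sum_sq_div_pow`).
The ratio in the theorem therefore tends to `1 / ((L + 2) c ^ (2 / L))`, and the value
`π ^ (L / 2) / Γ(L / 2 + 1)` for the volume of the unit ball turns this into the stated constant.
-/

/-- The weight `2 u` on `[0, 1]` gives the set `{u | a ≤ r u}` mass `1 - (a / r)²`. -/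
lemma integral_two_mul_indicator {a r : ℝ} (ha : 0 ≤ a) (hr : 0 < r) (har : a ≤ r) :
    IntervalIntegrable (fun u : ℝ => if a ≤ r * u then 2 * u else 0) MeasureTheory.volume 0 1 ∧
    ∫ u in (0 : ℝ)..1, (if a ≤ r * u then 2 * u else 0) = 1 - (a / r) ^ 2 := by
  have h0 : 0 ≤ a / r := by positivity
  have h1 : a / r ≤ 1 := (div_le_one hr).2 har
  have e1 : Set.EqOn (fun _ : ℝ => (0 : ℝ)) (fun u : ℝ => if a ≤ r * u then 2 * u else 0)
      (Set.uIoo 0 (a / r)) := by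
    intro u hu
    rw [Set.uIoo_of_le h0] at hu
    have : u * r < a := (lt_div_iff₀ hr).1 hu.2
    simp only
    rw [if_neg (by linarith)]
  have e2 : Set.EqOn (fun u : ℝ => 2 * u) (fun u : ℝ => if a ≤ r * u then 2 * u else 0)
      (Set.uIoo (a / r) 1) := by
    intro u hu
    rw [Set.uIoo_of_le h1] at hu
    have : a < u * r := (div_lt_iff₀ hr).1 hu.1
    simp only
    rw [if_pos (by linarith)]
  have i1 : IntervalIntegrable (fun u : ℝ => if a ≤ r * u then 2 * u else 0)
      MeasureTheory.volume 0 (a / r) :=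
    (intervalIntegrable_const (c := (0 : ℝ))).congr_uIoo e1
  have i2 : IntervalIntegrable (fun u : ℝ => if a ≤ r * u then 2 * u else 0)
      MeasureTheory.volume (a / r) 1 :=
    (Continuous.intervalIntegrable (by fun_prop) _ _).congr_uIoo e2
  have h2 : ∫ u in (a / r)..1, 2 * u = 1 - (a / r) ^ 2 := by
    rw [intervalIntegral.integral_const_mul, integral_id]
    ring
  refine ⟨i1.trans i2, ?_⟩
  rw [← intervalIntegral.integral_add_adjacent_intervals i1 i2,
    ← intervalIntegral.integral_congr_uIoo e1, ← intervalIntegral.integral_congr_uIoo e2]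
  rw [h2, intervalIntegral.integral_zero, zero_add]

/-- Abel summation, in integral form: a sum of squares over `a i ≤ r` in terms of the counting
function of the family `a`. -/
lemma sum_sq_eq_card_sub_integral {ι : Type*} (a : ι → ℝ) (ha : ∀ i, 0 ≤ a i)
    (hfin : ∀ r, Finite {i // a i ≤ r}) {r : ℝ} (hr : 0 < r) :
    ∑' i : {i // a i ≤ r}, a i ^ 2 = r ^ 2 * ((Nat.card {i // a i ≤ r} : ℝ) -
      ∫ u in (0 : ℝ)..1, 2 * u * (Nat.card {i // a i ≤ r * u} : ℝ)) := by
  have := hfin r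
  have := Fintype.ofFinite {i // a i ≤ r}
  have hcount : ∫ u in (0 : ℝ)..1, 2 * u * (Nat.card {i // a i ≤ r * u} : ℝ) =
      ∫ u in (0 : ℝ)..1, ∑ i : {i // a i ≤ r}, (if a i ≤ r * u then 2 * u else 0) := by
    refine intervalIntegral.integral_congr fun u hu => ?_
    rw [Set.uIcc_of_le zero_le_one] at hu
    have hle : r * u ≤ r := mul_le_of_le_one_right hr.le hu.2
    -- For `u ≤ 1` the points counted at radius `r u` are all counted at radius `r`.
    have e : {i : {i // a i ≤ r} // a i ≤ r * u} ≃ {i // a i ≤ r * u} :=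
      Equiv.subtypeSubtypeEquivSubtype (p := fun i => a i ≤ r) (q := fun i => a i ≤ r * u)
        (fun h => h.trans hle)
    rw [← Nat.card_congr e, Nat.card_eq_fintype_card, Fintype.card_subtype,
      ← Finset.sum_filter, Finset.sum_const, nsmul_eq_mul, mul_comm]
  rw [hcount, intervalIntegral.integral_finsetSum
    (fun (i : {i // a i ≤ r}) _ =>
      (integral_two_mul_indicator (ha i) hr i.2).1), tsum_fintype,
    Finset.sum_congr rfl (fun (i : {i // a i ≤ r}) _ =>
      (integral_two_mul_indicator (ha i) hr i.2).2),
    Finset.sum_sub_distrib]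
  simp only [div_pow, ← Finset.sum_div, Finset.sum_const, Finset.card_univ, nsmul_eq_mul,
    mul_one, Nat.card_eq_fintype_card]
  field_simp
  ring

/-- If the counting function of `a` grows like `c r ^ d`, the truncated sums of squares grow like
`c d / (d + 2) r ^ (d + 2)`. -/
lemma tendsto_sum_sq_div_pow {ι : Type*} (a : ι → ℝ) (ha : ∀ i, 0 ≤ a i)
    (hfin : ∀ r, Finite {i // a i ≤ r}) {d : ℕ} {c : ℝ}
    (h : Tendsto (fun r : ℝ => (Nat.card {i // a i ≤ r} : ℝ) / r ^ d) atTop (nhds c)) :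
    Tendsto (fun r : ℝ => (∑' i : {i // a i ≤ r}, a i ^ 2) / r ^ (d + 2)) atTop
      (nhds (c * d / (d + 2))) := by
  have hmono : Monotone fun r : ℝ => (Nat.card {i // a i ≤ r} : ℝ) := by
    intro r s hrs
    have := hfin s
    refine Nat.cast_le.2 (Nat.card_le_card_of_injective _
      (Subtype.impEmbedding _ _ fun i (hi : a i ≤ r) => hi.trans hrs).injective)
  have hint : Tendsto (fun r : ℝ => ∫ u in (0 : ℝ)..1,
      2 * u * (Nat.card {i // a i ≤ r * u} : ℝ) / r ^ d) atTop
      (nhds (∫ u in (0 : ℝ)..1, 2 * c * u ^ (d + 1))) := by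
    refine intervalIntegral.tendsto_integral_filter_of_dominated_convergence
      (fun _ => 2 * (c + 1)) ?_ ?_ intervalIntegrable_const ?_
    · refine Eventually.of_forall fun r => Measurable.aestronglyMeasurable ?_
      have := hmono.measurable.comp (measurable_const_mul r)
      exact ((measurable_id.const_mul 2).mul this).div_const _
    · filter_upwards [eventually_gt_atTop 0, h.eventually_le_const (lt_add_one c)] with r hr hb
      refine Eventually.of_forall fun u hu => ?_
      rw [Set.uIoc_of_le zero_le_one] at hu
      have hu0 := hu.1.le
      rw [Real.norm_of_nonneg (by positivity)]
      calc 2 * u * (Nat.card {i // a i ≤ r * u} : ℝ) / r ^ d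
          ≤ 2 * 1 * (Nat.card {i // a i ≤ r} : ℝ) / r ^ d := by
            gcongr
            · exact hu.2
            · exact Nat.cast_le.1 (hmono (mul_le_of_le_one_right hr.le hu.2))
        _ = 2 * ((Nat.card {i // a i ≤ r} : ℝ) / r ^ d) := by ring
        _ ≤ 2 * (c + 1) := by gcongr
    · refine Eventually.of_forall fun u hu => ?_
      rw [Set.uIoc_of_le zero_le_one] at hu
      have hu0 := hu.1
      have := (h.comp (tendsto_id.atTop_mul_const hu0)).const_mul (2 * u ^ (d + 1))
      convert this using 2 with r
      · simp only [Function.comp, id, mul_pow, pow_succ]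
        field_simp
      · ring
  have hlim := h.sub hint
  have hc : c - ∫ u in (0 : ℝ)..1, 2 * c * u ^ (d + 1) = c * d / (d + 2) := by
    rw [intervalIntegral.integral_const_mul, integral_pow]
    push_cast
    field_simp
    simp
    ring
  rw [hc] at hlim
  refine hlim.congr' ?_
  filter_upwards [eventually_gt_atTop 0] with r hr
  rw [sum_sq_eq_card_sub_integral a ha hfin hr, intervalIntegral.integral_div, pow_add]
  field_simp

/-- The number of lattice points in a ball is asymptotic to its volume over the covolume. -/
lemma tendsto_card_norm_le_div_pow {L : ℕ} (hL : 1 ≤ L)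
    (Λ : Submodule ℤ (EuclideanSpace ℝ (Fin L))) [DiscreteTopology Λ] [IsZLattice ℝ Λ] :
    Tendsto (fun r : ℝ =>
      (Nat.card {x : Λ // ‖(x : EuclideanSpace ℝ (Fin L))‖ ≤ r} : ℝ) / r ^ L) atTop
      (nhds (√Real.pi ^ L / Real.Gamma ((L : ℝ) / 2 + 1) / ZLattice.covolume Λ)) := by
  have hL0 : L ≠ 0 := by omega
  have : Nonempty (Fin L) := ⟨⟨0, hL⟩⟩
  have hball : {x ∈ (Set.univ : Set (EuclideanSpace ℝ (Fin L))) | ‖x‖ ^ L ≤ 1} =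
      Metric.closedBall 0 1 := by
    ext x
    simp [pow_le_one_iff_of_nonneg (norm_nonneg x) hL0]
  have key := ZLattice.covolume.tendsto_card_le_div' Λ (X := Set.univ) (F := fun x => ‖x‖ ^ L)
    (fun _ _ _ _ => Set.mem_univ _)
    (fun x r hr => by simp [norm_smul, abs_of_nonneg hr, mul_pow])
    (by rw [hball]; exact Metric.isBounded_closedBall)
    (by rw [hball]; exact measurableSet_closedBall)
    (by
      rw [hball, frontier_closedBall _ one_ne_zero]
      exact MeasureTheory.Measure.addHaar_sphere _ _ _)
  have hvol : MeasureTheory.volume.real (Metric.closedBall (0 : EuclideanSpace ℝ (Fin L)) 1) =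
      √Real.pi ^ L / Real.Gamma ((L : ℝ) / 2 + 1) := by
    have hG : 0 < Real.Gamma ((L : ℝ) / 2 + 1) := Real.Gamma_pos_of_pos (by positivity)
    rw [MeasureTheory.measureReal_def, EuclideanSpace.volume_closedBall]
    simp only [Fintype.card_fin, ENNReal.ofReal_one, one_pow, one_mul]
    exact ENNReal.toReal_ofReal (by positivity)
  rw [hball, hvol] at key
  refine (key.comp (tendsto_pow_atTop hL0)).congr' ?_
  filter_upwards [eventually_ge_atTop 0] with r hr
  simp only [Function.comp]
  congr 2
  refine Nat.card_congr ⟨fun x => ⟨⟨x.1, x.2.2⟩, ?_⟩, fun x => ⟨x.1.1, ?_, x.1.2⟩,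
    fun _ => rfl, fun _ => rfl⟩
  · exact (pow_le_pow_iff_left₀ (norm_nonneg _) hr hL0).1 x.2.1.2
  · exact ⟨Set.mem_univ _, pow_le_pow_left₀ (norm_nonneg _) x.2 _⟩

lemma finite_norm_le {L : ℕ} (Λ : Submodule ℤ (EuclideanSpace ℝ (Fin L)))
    [DiscreteTopology Λ] (r : ℝ) :
    Finite {x : Λ // ‖(x : EuclideanSpace ℝ (Fin L))‖ ≤ r} := by
  have hc : IsClosed (Λ : Set (EuclideanSpace ℝ (Fin L))) := by
    rw [← Submodule.coe_toAddSubgroup]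
    have : DiscreteTopology Λ.toAddSubgroup := ‹DiscreteTopology Λ›
    exact AddSubgroup.isClosed_of_discrete
  have hf := (Metric.finite_isBounded_inter_isClosed DiscreteTopology.isDiscrete
    (Metric.isBounded_closedBall (x := (0 : EuclideanSpace ℝ (Fin L))) (r := r)) hc).preimage
    (f := ((↑) : Λ → EuclideanSpace ℝ (Fin L))) Subtype.val_injective.injOn
  refine (hf.subset fun x (hx : ‖(x : EuclideanSpace ℝ (Fin L))‖ ≤ r) => ?_).to_subtype
  exact ⟨by simpa using hx, x.2⟩

/-- For a full-rank lattice `Λ ⊂ ℝ^L` with covolume `ν`, setting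
`N(r) = #{λ ∈ Λ : ‖λ‖ ≤ r}` and `T(r) = Σ_{λ∈Λ, ‖λ‖≤r} ‖λ‖²`, one has
`lim_{r→∞} T(r)/(L·N(r)^{1+2/L}) = G(S_L)·ν^{2/L}`, where
`G(S_L) = Γ(L/2+1)^{2/L}/((L+2)π)` is the normalized second moment of a
sphere in `L` dimensions. -/
theorem lattice_normalized_second_moment_limit {L : ℕ} (hL : 1 ≤ L)
    (Λ : Submodule ℤ (EuclideanSpace ℝ (Fin L)))
    [DiscreteTopology Λ] [IsZLattice ℝ Λ] :
    Tendsto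
      (fun r : ℝ =>
        (∑' x : {x : Λ // ‖(x : EuclideanSpace ℝ (Fin L))‖ ≤ r},
            ‖((x : Λ) : EuclideanSpace ℝ (Fin L))‖ ^ 2)
          / ((L : ℝ) *
            (Nat.card {x : Λ // ‖(x : EuclideanSpace ℝ (Fin L))‖ ≤ r} : ℝ)
              ^ (1 + 2 / (L : ℝ))))
      atTop
      (nhds ((Real.Gamma ((L : ℝ) / 2 + 1) ^ (2 / (L : ℝ)) / (((L : ℝ) + 2) * Real.pi))
        * ZLattice.covolume Λ ^ (2 / (L : ℝ)))) := by
  set G := Real.Gamma ((L : ℝ) / 2 + 1) with hGdef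
  set ν := ZLattice.covolume Λ with hν
  set c := √Real.pi ^ L / G / ν with hcdef
  have hL' : (0 : ℝ) < L := by exact_mod_cast hL
  have hG : 0 < G := Real.Gamma_pos_of_pos (by positivity)
  have hν0 : 0 < ν := ZLattice.covolume_pos Λ _
  have hπ := Real.pi_pos
  have hc : 0 < c := by positivity
  have hN := tendsto_card_norm_le_div_pow hL Λ
  have hT := tendsto_sum_sq_div_pow (fun x : Λ => ‖(x : EuclideanSpace ℝ (Fin L))‖)
    (fun _ => norm_nonneg _) (finite_norm_le Λ) hN
  have hlim := hT.div ((hN.rpow_const (p := 1 + 2 / (L : ℝ)) (Or.inl hc.ne')).const_mul (L : ℝ))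
    (by positivity)
  have hval : c * L / (L + 2) / (L * c ^ (1 + 2 / (L : ℝ))) =
      G ^ (2 / (L : ℝ)) / (((L : ℝ) + 2) * Real.pi) * ν ^ (2 / (L : ℝ)) := by
    have hcpow : c ^ (2 / (L : ℝ)) = Real.pi / G ^ (2 / (L : ℝ)) / ν ^ (2 / (L : ℝ)) := by
      rw [hcdef, Real.div_rpow (by positivity) hν0.le, Real.div_rpow (by positivity) hG.le,
        ← Real.rpow_natCast, ← Real.rpow_mul (by positivity), mul_div_cancel₀ _ hL'.ne']
      norm_num [Real.sq_sqrt hπ.le]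
    rw [Real.rpow_add hc, Real.rpow_one, hcpow]
    have := Real.rpow_pos_of_pos hG (2 / (L : ℝ))
    have := Real.rpow_pos_of_pos hν0 (2 / (L : ℝ))
    field_simp
  rw [← hval]
  refine hlim.congr' ?_
  filter_upwards [eventually_gt_atTop 0] with r hr
  -- The normalising powers cancel: `(r ^ L) ^ (1 + 2 / L) = r ^ (L + 2)`.
  have hrpow : (r ^ L) ^ (1 + 2 / (L : ℝ)) = r ^ (L + 2) := by
    rw [← Real.rpow_natCast, ← Real.rpow_mul hr.le, ← Real.rpow_natCast]
    congr 1
    push_cast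
    field_simp
  simp only [Pi.div_apply]
  rw [Real.div_rpow (by positivity) (by positivity), hrpow, ← mul_div_assoc,
    div_div_div_cancel_right₀ (by positivity)]
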